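/- Let p = 1. There exist absolute constants C, c, c₁, c₂ ∈ (0,∞) such that for every m ∈ ℕ, every 1 ≤ n < m, and all semiaxes σ₁ ≥ σ₂ ≥ … ≥ σ_m > 0, if G_{n,m} is an n×m random matrix with i.i.d. standard Gaussian entries, then with probability at least 1 − c₁·exp(−c₂·n) one has rad(E^m_{1,σ}, ker G_{n,m}) ≤ C·n^{−1/2}·sup_{k ≤ j ≤ m} σ_j·√(log j + 1), where k := max(1, ⌈c·n⌉). -/

import Mathlib

open MeasureTheory ProbabilityTheory
open scoped ENNReal NNReal

/-- The `ℓ_p`-(quasi-)norm on `ℝ^m`, for `0 < p ≤ ∞`. -/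
noncomputable def lpnorm (p : ℝ≥0∞) {m : ℕ} (x : Fin m → ℝ) : ℝ :=
  if p = ∞ then ⨆ j, |x j| else (∑ j, |x j| ^ p.toReal) ^ (1 / p.toReal)

/-- The `ℓ_p`-ellipsoid with semiaxes `σ`. -/
noncomputable def ellipsoid (p : ℝ≥0∞) {m : ℕ} (σ : Fin m → ℝ) : Set (Fin m → ℝ) :=
  {x | lpnorm p (fun j => x j / σ j) ≤ 1}

/-- `rad_q(K, E)`: the supremum of the `ℓ_q`-norm over `K ∩ E`. -/
noncomputable def radq (q : ℝ≥0∞) {m : ℕ} (K E : Set (Fin m → ℝ)) : ℝ :=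
  sSup (lpnorm q '' (K ∩ E))

/-- The distribution of an `n × m` random matrix with i.i.d. standard Gaussian entries. -/
noncomputable def gaussianMatrix (n m : ℕ) : Measure (Fin n → Fin m → ℝ) :=
  Measure.pi fun _ : Fin n => Measure.pi fun _ : Fin m => gaussianReal 0 1

/-- The kernel of a matrix `A ∈ ℝ^{n×m}`, as a subset of `ℝ^m`. -/
def kerSet {n m : ℕ} (A : Fin n → Fin m → ℝ) : Set (Fin m → ℝ) :=
  {x | ∀ i, ∑ j, A i j * x j = 0}

/-- The Hölder conjugate `p*` of `p ∈ (1, ∞]`, as a real number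
(with the convention `(∞ : ℝ≥0∞).toReal = 0`, so `pstar ∞ = 1`). -/
noncomputable def pstar (p : ℝ≥0∞) : ℝ := (1 - 1 / p.toReal)⁻¹

/-!
Put `s_j = log j + 1` for `j ≥ k` and `s_j = 0` for `j < k`, so that `∑ exp (-2 s_j) ≤ k`. On the
ellipsoid, `∑ |x_j| √s_j ≤ sup_{j ≥ k} σ_j √s_j`, hence it suffices that with high probability every
`x` in the kernel of the Gaussian matrix `G` satisfies `‖x‖ ≤ C n^{-1/2} ∑ |x_j| √s_j`.

With `S = ∑ |x_j| √s_j` and `t = 100 S / n`, split `x = y + z`, where `z` collects the coordinates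
with `|x_j| ≤ t √s_j`. The support of `y` has `s`-weight at most `n / 100`, and `‖z‖² ≤ t S`.
Vectors of small support weight admit a net of cardinality `exp (O(k) + n / 25)`, which beats the
small-ball probability `exp (-3 n / 10)`, so `‖G y‖ ≥ √n ‖y‖ / 8`. On the other side, a dual net in
`ℝ^n` together with exponential moments of `∑ max (g_j² - 8 s_j) 0` gives
`‖G z‖ ≤ 80 n t + 8 S`. Since `G y = -G z`, both `‖y‖` and `‖z‖` are `O(S / √n)`.
-/
section GaussianTails

variable {ι : Type*} [Fintype ι]

lemma lintegral_pi_prod_eq_prod {X : ι → Type*} [∀ i, MeasurableSpace (X i)]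
    (μ : ∀ i, Measure (X i)) [∀ i, IsProbabilityMeasure (μ i)] {f : ∀ i, X i → ℝ≥0∞}
    (hf : ∀ i, Measurable (f i)) :
    ∫⁻ x, ∏ i, f i (x i) ∂Measure.pi μ = ∏ i, ∫⁻ x, f i x ∂μ i := by
  rw [lintegral_prod_eq_prod_lintegral_of_indepFun Finset.univ
    (fun i (x : ∀ i, X i) ↦ f i (x i)) (iIndepFun_pi fun i ↦ (hf i).aemeasurable)
    fun i ↦ (hf i).comp (measurable_pi_apply i)]
  exact Finset.prod_congr rfl fun i _ ↦ (measurePreserving_eval μ i).lintegral_comp (hf i)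

lemma measure_pi_le_sum_le {X : ι → Type*} [∀ i, MeasurableSpace (X i)]
    (μ : ∀ i, Measure (X i)) [∀ i, IsProbabilityMeasure (μ i)] {f : ∀ i, X i → ℝ}
    (hf : ∀ i, Measurable (f i)) (K : ℝ) :
    Measure.pi μ {x | K ≤ ∑ i, f i (x i)} ≤
      (∏ i, ∫⁻ x, ENNReal.ofReal (Real.exp (f i x)) ∂μ i) / ENNReal.ofReal (Real.exp K) := by
  have hexp : ∀ i, Measurable fun x ↦ ENNReal.ofReal (Real.exp (f i x)) := fun i ↦ by fun_prop
  rw [← lintegral_pi_prod_eq_prod μ hexp]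
  have hmeas : Measurable fun x : ∀ i, X i ↦ ∏ i, ENNReal.ofReal (Real.exp (f i (x i))) :=
    Finset.measurable_prod _ fun i _ ↦ (hexp i).comp (measurable_pi_apply i)
  refine (measure_mono fun x hx ↦ ?_).trans (meas_ge_le_lintegral_div hmeas.aemeasurable
    (by simp [Real.exp_pos]) ENNReal.ofReal_ne_top)
  rw [Set.mem_ofPred_eq] at hx ⊢
  rw [← ENNReal.ofReal_prod_of_nonneg fun i _ ↦ (Real.exp_pos _).le, ← Real.exp_sum]
  gcongr

lemma lintegral_exp_mul_sq_gaussianReal {v : ℝ≥0} {b : ℝ} (hb : 2 * b * v < 1) :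
    ∫⁻ x, ENNReal.ofReal (Real.exp (b * x ^ 2)) ∂gaussianReal 0 v =
      ENNReal.ofReal (√(1 - 2 * b * v))⁻¹ := by
  rcases eq_or_ne v 0 with rfl | hv
  · simp
  have hrate : 0 < (1 - 2 * b * v) / (2 * v) := div_pos (by linarith) (by positivity)
  have hdensity (x : ℝ) : (gaussianPDF 0 v * fun x ↦ ENNReal.ofReal (Real.exp (b * x ^ 2))) x =
      ENNReal.ofReal ((√(2 * Real.pi * v))⁻¹ *
        Real.exp (-((1 - 2 * b * v) / (2 * v)) * x ^ 2)) := by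
    rw [Pi.mul_apply, gaussianPDF_def, gaussianPDFReal_def, ← ENNReal.ofReal_mul (by positivity),
      mul_assoc, ← Real.exp_add]
    congr 3
    field_simp
    ring
  rw [gaussianReal_of_var_ne_zero 0 hv,
    lintegral_withDensity_eq_lintegral_mul _ (measurable_gaussianPDF 0 v) (by fun_prop),
    lintegral_congr hdensity, ← ofReal_integral_eq_lintegral_ofReal
      ((integrable_exp_neg_mul_sq hrate).const_mul _) (.of_forall fun x ↦ by positivity),
    integral_const_mul, integral_gaussian, ← Real.sqrt_inv, ← Real.sqrt_inv,
    ← Real.sqrt_mul (by positivity)]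
  have : 1 - 2 * b * v ≠ 0 := by linarith
  congr 2
  field_simp

lemma measure_pi_gaussianReal_sum_sq_le {v : ℝ≥0} (hv : v ≠ 0) :
    Measure.pi (fun _ : ι ↦ gaussianReal 0 v) {x | ∑ i, x i ^ 2 ≤ Fintype.card ι / 4 * v} ≤
      ENNReal.ofReal (Real.exp (-(3 / 10) * Fintype.card ι)) := by
  set n := Fintype.card ι
  have hsub : {x : ι → ℝ | ∑ i, x i ^ 2 ≤ n / 4 * v} ⊆
      {x | -(3 / 8) * (n : ℝ) ≤ ∑ i, -(3 / (2 * (v : ℝ))) * x i ^ 2} := fun x hx ↦ by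
    rw [Set.mem_ofPred_eq] at hx ⊢
    rw [← Finset.mul_sum]
    calc -(3 / 8) * (n : ℝ) = -(3 / (2 * v)) * (n / 4 * v) := by field_simp; ring
      _ ≤ _ := mul_le_mul_of_nonpos_left hx (neg_nonpos.2 (by positivity))
  have hmoment : ∫⁻ x, ENNReal.ofReal (Real.exp (-(3 / (2 * (v : ℝ))) * x ^ 2)) ∂gaussianReal 0 v =
      ENNReal.ofReal (1 / 2) := by
    have hvar : 2 * (-(3 / (2 * (v : ℝ)))) * v = -3 := by field_simp
    rw [lintegral_exp_mul_sq_gaussianReal (by linarith), hvar,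
      show (1 - -3 : ℝ) = 2 ^ 2 by norm_num, Real.sqrt_sq (by norm_num), one_div]
  have hhalf : (1 / 2 : ℝ) ≤ Real.exp (-(27 / 40)) := by
    rw [← Real.log_le_iff_le_exp (by norm_num), one_div, Real.log_inv]
    linarith [Real.log_two_gt_d9]
  refine (measure_mono hsub).trans ((measure_pi_le_sum_le _
    (f := fun _ x ↦ -(3 / (2 * (v : ℝ))) * x ^ 2) (fun _ ↦ by fun_prop) _).trans ?_)
  rw [Finset.prod_congr rfl fun _ _ ↦ hmoment, Finset.prod_const, Finset.card_univ,
    ← ENNReal.ofReal_pow (by norm_num), ← ENNReal.ofReal_div_of_pos (Real.exp_pos _)]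
  refine ENNReal.ofReal_le_ofReal ((div_le_iff₀ (Real.exp_pos _)).2 ?_)
  calc (1 / 2 : ℝ) ^ n ≤ Real.exp (-(27 / 40)) ^ n := by gcongr
    _ = Real.exp (-(3 / 10) * n) * Real.exp (-(3 / 8) * n) := by
      rw [← Real.exp_nat_mul, ← Real.exp_add]
      ring_nf

/-- The total excess of the squared coordinates of `g` over the thresholds `8 s_j`. It has small
exponential moments for Gaussian `g`, however many coordinates there are, as long as
`∑ exp (-2 s_j)` is controlled. -/
noncomputable def excess (s g : ι → ℝ) : ℝ := ∑ j, max (g j ^ 2 - 8 * s j) 0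

lemma lintegral_exp_max_gaussianReal_le {v : ℝ≥0} (hv : v ≤ 1) (a : ℝ) :
    ∫⁻ x, ENNReal.ofReal (Real.exp (max (x ^ 2 - 8 * a) 0 / 4)) ∂gaussianReal 0 v ≤
      ENNReal.ofReal (Real.exp (2 * Real.exp (-2 * a))) := by
  rw [← NNReal.coe_le_one] at hv
  have hsqrt : (√(1 - 2 * (1 / 4) * v))⁻¹ ≤ 2 := by
    have : (1 / 2 : ℝ) ≤ √(1 - 2 * (1 / 4) * v) := Real.le_sqrt_of_sq_le (by linarith)
    exact inv_le_of_inv_le₀ (by norm_num) (by linarith)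
  calc _ ≤ ∫⁻ x, (1 + ENNReal.ofReal (Real.exp (-2 * a)) *
          ENNReal.ofReal (Real.exp (1 / 4 * x ^ 2))) ∂gaussianReal 0 v := by
        refine lintegral_mono fun x ↦ ?_
        rw [← ENNReal.ofReal_mul (Real.exp_pos _).le, ← Real.exp_add, ← ENNReal.ofReal_one,
          ← ENNReal.ofReal_add zero_le_one (Real.exp_pos _).le]
        refine ENNReal.ofReal_le_ofReal ?_
        rcases max_cases (x ^ 2 - 8 * a) 0 with ⟨h, -⟩ | ⟨h, -⟩ <;> rw [h]
        · rw [show (x ^ 2 - 8 * a) / 4 = -2 * a + 1 / 4 * x ^ 2 by ring]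
          linarith
        · simp [Real.exp_nonneg]
    _ = 1 + ENNReal.ofReal (Real.exp (-2 * a)) *
          ENNReal.ofReal (√(1 - 2 * (1 / 4) * v))⁻¹ := by
        rw [lintegral_add_left (by fun_prop), lintegral_const_mul _ (by fun_prop),
          lintegral_exp_mul_sq_gaussianReal (by linarith)]
        simp
    _ ≤ _ := by
        rw [← ENNReal.ofReal_mul (Real.exp_pos _).le, ← ENNReal.ofReal_one,
          ← ENNReal.ofReal_add zero_le_one (by positivity)]
        refine ENNReal.ofReal_le_ofReal ?_
        have := mul_le_mul_of_nonneg_left hsqrt (Real.exp_pos (-2 * a)).le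
        linarith [Real.add_one_le_exp (2 * Real.exp (-2 * a))]

lemma measure_pi_gaussianReal_le_excess_le {v : ℝ≥0} (hv : v ≤ 1) (s : ι → ℝ) (K : ℝ) :
    Measure.pi (fun _ : ι ↦ gaussianReal 0 v) {g | K ≤ excess s g} ≤
      ENNReal.ofReal (Real.exp (2 * ∑ j, Real.exp (-2 * s j) - K / 4)) := by
  have hset : {g | K ≤ excess s g} =
      {g : ι → ℝ | K / 4 ≤ ∑ j, max (g j ^ 2 - 8 * s j) 0 / 4} := by
    ext g
    rw [Set.mem_ofPred_eq, Set.mem_ofPred_eq, ← Finset.sum_div, div_le_div_iff_of_pos_right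
      (by norm_num), excess]
  rw [hset, Real.exp_sub, ENNReal.ofReal_div_of_pos (Real.exp_pos _), Finset.mul_sum,
    Real.exp_sum, ENNReal.ofReal_prod_of_nonneg fun _ _ ↦ (Real.exp_pos _).le]
  refine (measure_pi_le_sum_le _ (f := fun j x ↦ max (x ^ 2 - 8 * s j) 0 / 4)
    (fun j ↦ by fun_prop) _).trans (ENNReal.div_le_div_right ?_ _)
  exact Finset.prod_le_prod' fun j _ ↦ lintegral_exp_max_gaussianReal_le hv (s j)

end GaussianTails

section GaussianMatrix

variable {n m : ℕ}

/-- The operator between Euclidean spaces given by an array of matrix entries. -/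
noncomputable abbrev euclideanLin (A : Fin n → Fin m → ℝ) :
    EuclideanSpace ℝ (Fin m) →ₗ[ℝ] EuclideanSpace ℝ (Fin n) :=
  Matrix.toEuclideanLin (Matrix.of A)

instance : IsProbabilityMeasure (gaussianMatrix n m) := by
  unfold gaussianMatrix; infer_instance

lemma map_dotProduct_pi_gaussianReal {ι : Type*} [Fintype ι] (y : EuclideanSpace ℝ ι) :
    (Measure.pi fun _ : ι ↦ gaussianReal 0 1).map (fun a ↦ ∑ j, a j * y j) =
      gaussianReal 0 (‖y‖₊ ^ 2) := by
  have hcomp : (fun a : ι → ℝ ↦ ∑ j, a j * y j) = innerSL ℝ y ∘ WithLp.toLp 2 := by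
    ext a
    simp [PiLp.inner_apply]
  rw [hcomp, ← Measure.map_map (by fun_prop) (by fun_prop), map_pi_eq_stdGaussian,
    IsGaussian.map_eq_gaussianReal, integral_strongDual_stdGaussian, variance_dual_stdGaussian,
    innerSL_apply_norm]
  congr
  ext
  simp

lemma measurable_euclideanLin_apply (y : EuclideanSpace ℝ (Fin m)) :
    Measurable fun A : Fin n → Fin m → ℝ ↦ (euclideanLin A y).ofLp := by
  refine measurable_pi_iff.2 fun i ↦ ?_
  change Measurable fun A : Fin n → Fin m → ℝ ↦ ∑ j, A i j * y j
  fun_prop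

lemma map_euclideanLin_gaussianMatrix (y : EuclideanSpace ℝ (Fin m)) :
    (gaussianMatrix n m).map (fun A ↦ (euclideanLin A y).ofLp) =
      Measure.pi fun _ : Fin n ↦ gaussianReal 0 (‖y‖₊ ^ 2) := by
  simp_rw [← map_dotProduct_pi_gaussianReal y]
  exact Measure.pi_map_pi (f := fun _ (a : Fin m → ℝ) ↦ ∑ j, a j * y j)
    fun _ ↦ Measurable.aemeasurable (by fun_prop)

lemma map_transpose_gaussianMatrix :
    (gaussianMatrix n m).map (fun A j i ↦ A i j) = gaussianMatrix m n := by
  have hcurry (a b : ℕ) :=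
    Measure.infinitePi_map_curry fun (_ : Fin a) (_ : Fin b) ↦ gaussianReal 0 1
  simp only [Measure.infinitePi_eq_pi] at hcurry
  have hswap := (measurePreserving_piCongrLeft (fun _ : Fin m × Fin n ↦ gaussianReal 0 1)
    (Equiv.prodComm (Fin n) (Fin m))).map_eq
  rw [gaussianMatrix, gaussianMatrix, ← hcurry n m, ← hcurry m n, ← hswap,
    Measure.map_map (by fun_prop) (by fun_prop), Measure.map_map (by fun_prop) (by fun_prop)]
  rfl

lemma map_adjoint_euclideanLin_gaussianMatrix (v : EuclideanSpace ℝ (Fin n)) :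
    (gaussianMatrix n m).map (fun A ↦ ((euclideanLin A).adjoint v).ofLp) =
      Measure.pi fun _ : Fin m ↦ gaussianReal 0 (‖v‖₊ ^ 2) := by
  have hadj (A : Fin n → Fin m → ℝ) : (euclideanLin A).adjoint = euclideanLin fun j i ↦ A i j := by
    rw [euclideanLin, ← Matrix.toEuclideanLin_conjTranspose_eq_adjoint]
    rfl
  simp_rw [hadj]
  rw [← map_euclideanLin_gaussianMatrix v,
    ← map_transpose_gaussianMatrix (n := n) (m := m),
    Measure.map_map (measurable_euclideanLin_apply v) (by fun_prop)]
  rfl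

lemma gaussianMatrix_norm_euclideanLin_lt_le (y : EuclideanSpace ℝ (Fin m)) :
    gaussianMatrix n m {A | ‖euclideanLin A y‖ < √n / 2 * ‖y‖} ≤
      ENNReal.ofReal (Real.exp (-(3 / 10) * n)) := by
  rcases eq_or_ne y 0 with rfl | hy
  · simp
  have htail := measure_pi_gaussianReal_sum_sq_le (ι := Fin n)
    (pow_ne_zero 2 (nnnorm_ne_zero_iff.2 hy))
  rw [Fintype.card_fin, ← map_euclideanLin_gaussianMatrix] at htail
  refine (measure_mono fun A hA ↦ ?_).trans
    ((Measure.le_map_apply (measurable_euclideanLin_apply y).aemeasurable _).trans htail)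
  have hsq := pow_le_pow_left₀ (norm_nonneg _) (le_of_lt hA) 2
  rw [mul_pow, div_pow, Real.sq_sqrt n.cast_nonneg, EuclideanSpace.real_norm_sq_eq,
    show (2 : ℝ) ^ 2 = 4 by norm_num] at hsq
  simpa using hsq

lemma gaussianMatrix_le_excess_adjoint_le {v : EuclideanSpace ℝ (Fin n)} (hv : ‖v‖ ≤ 1)
    (s : Fin m → ℝ) (K : ℝ) :
    gaussianMatrix n m {A | K ≤ excess s ((euclideanLin A).adjoint v).ofLp} ≤
      ENNReal.ofReal (Real.exp (2 * ∑ j, Real.exp (-2 * s j) - K / 4)) := by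
  have hvar : ‖v‖₊ ^ 2 ≤ 1 := pow_le_one₀ zero_le hv
  have htail := measure_pi_gaussianReal_le_excess_le hvar s K
  rw [← map_adjoint_euclideanLin_gaussianMatrix] at htail
  refine (Measure.le_map_apply (f := fun A ↦ ((euclideanLin A).adjoint v).ofLp)
    (AEMeasurable.of_map_ne_zero ?_) {g | K ≤ excess s g}).trans htail
  rw [map_adjoint_euclideanLin_gaussianMatrix]
  exact IsProbabilityMeasure.ne_zero _

end GaussianMatrix

section Nets

variable {ι : Type*} [Fintype ι]

/-- The total `s`-weight of the coordinates in the support of `y`. Bounding it is the weighted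
analogue of sparsity, which is recovered for `s = 1`. -/
noncomputable def supportWeight {R : Type*} [Zero R] (s : ι → ℝ) (y : ι → R) : ℝ :=
  ∑ j, (Function.support y).indicator s j

lemma supportWeight_le_of_support_subset {R R' : Type*} [Zero R] [Zero R'] {s : ι → ℝ}
    (hs : 0 ≤ s) {y : ι → R} {z : ι → R'} (h : Function.support y ⊆ Function.support z) :
    supportWeight s y ≤ supportWeight s z :=
  Finset.sum_le_sum fun j _ ↦ Set.indicator_le_indicator_of_subset h hs j

lemma supportWeight_one_le {R : Type*} [Zero R] (s : ι → ℝ) (y : ι → R) :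
    supportWeight 1 y ≤ ∑ j, Real.exp (-2 * s j) + 2 * supportWeight s y := by
  rw [supportWeight, supportWeight, Finset.mul_sum, ← Finset.sum_add_distrib]
  refine Finset.sum_le_sum fun j _ ↦ ?_
  by_cases hj : j ∈ Function.support y
  · simp only [Set.indicator_of_mem hj, Pi.one_apply]
    linarith [Real.add_one_le_exp (-2 * s j)]
  · simp [Set.indicator_of_notMem hj, Real.exp_nonneg]

lemma sum_range_succ_inv_sq_le_two (n : ℕ) :
    ∑ i ∈ Finset.range (n + 1), ((i : ℝ) ^ 2)⁻¹ ≤ 2 := by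
  rw [Finset.range_eq_Ico, ← Finset.Ioo_insert_left n.succ_pos, Finset.sum_insert (by simp)]
  simpa using sum_Ioo_inv_sq_le (α := ℝ) 0 (n + 1)

lemma sum_int_inv_sq_le_four (F : Finset ℤ) : ∑ z ∈ F, ((z : ℝ) ^ 2)⁻¹ ≤ 4 := by
  set B := F.sup Int.natAbs
  have hF : F ⊆ Finset.Icc (-B : ℤ) B := fun z hz ↦ by
    have : z.natAbs ≤ B := Finset.le_sup hz
    exact Finset.mem_Icc.2 (by omega)
  have heven : (fun z : ℤ ↦ ((z : ℝ) ^ 2)⁻¹).Even := fun z ↦ by simp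
  calc ∑ z ∈ F, ((z : ℝ) ^ 2)⁻¹ ≤ ∑ z ∈ Finset.Icc (-B : ℤ) B, ((z : ℝ) ^ 2)⁻¹ :=
        Finset.sum_le_sum_of_subset_of_nonneg hF fun _ _ _ ↦ by positivity
    _ = 2 * ∑ i ∈ Finset.range (B + 1), ((i : ℝ) ^ 2)⁻¹ := by
        rw [Finset.sum_Icc_of_even_eq_range heven]
        simp
    _ ≤ 4 := by linarith [sum_range_succ_inv_sq_le_two B]

lemma sum_int_exp_neg_sq_le (F : Finset ℤ) {a : ℝ} (ha : 0 < a) (c : ℝ) :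
    ∑ z ∈ F, Real.exp (-(a * z ^ 2) - 2 * if z = 0 then 0 else c) ≤
      Real.exp (4 / a * Real.exp (-2 * c)) := by
  have hterm (z : ℤ) : Real.exp (-(a * z ^ 2) - 2 * if z = 0 then 0 else c) ≤
      (if z = 0 then 1 else 0) + Real.exp (-2 * c) / a * ((z : ℝ) ^ 2)⁻¹ := by
    split_ifs with hz
    · simp [hz]
    have : 0 < a * (z : ℝ) ^ 2 := by positivity
    calc Real.exp (-(a * z ^ 2) - 2 * c)
        = Real.exp (-2 * c) * (Real.exp (a * z ^ 2))⁻¹ := by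
          rw [← Real.exp_neg, ← Real.exp_add]
          ring_nf
      _ ≤ Real.exp (-2 * c) * (a * (z : ℝ) ^ 2)⁻¹ := by
          gcongr
          linarith [Real.add_one_le_exp (a * (z : ℝ) ^ 2)]
      _ = _ := by rw [zero_add, mul_inv, ← mul_assoc, div_eq_mul_inv]
  calc _ ≤ ∑ z ∈ F, ((if z = 0 then 1 else 0) + Real.exp (-2 * c) / a * ((z : ℝ) ^ 2)⁻¹) :=
        Finset.sum_le_sum fun z _ ↦ hterm z
    _ ≤ 1 + Real.exp (-2 * c) / a * 4 := by
        rw [Finset.sum_add_distrib, ← Finset.mul_sum]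
        gcongr
        · rw [Finset.sum_ite_eq']
          split_ifs <;> simp
        · exact sum_int_inv_sq_le_four F
    _ = 4 / a * Real.exp (-2 * c) + 1 := by ring
    _ ≤ _ := Real.add_one_le_exp _

lemma card_le_exp_of_forall_supportWeight_le {N : Finset (ι → ℤ)} {s : ι → ℝ} {a d D : ℝ}
    (ha : 0 < a) (hN : ∀ z ∈ N, a * ∑ j, (z j : ℝ) ^ 2 ≤ d ∧ supportWeight s z ≤ D) :
    (N.card : ℝ) ≤ Real.exp (d + 2 * D + 4 / a * ∑ j, Real.exp (-2 * s j)) := by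
  classical
  have hsub : N ⊆ Fintype.piFinset fun j ↦ N.image (· j) := fun z hz ↦
    Fintype.mem_piFinset.2 fun j ↦ Finset.mem_image_of_mem _ hz
  set f : ι → ℤ → ℝ := fun j z ↦ Real.exp (-(a * z ^ 2) - 2 * if z = 0 then 0 else s j) with hf
  have hf_nonneg (j : ι) (z : ℤ) : 0 ≤ f j z := (Real.exp_pos _).le
  have hterm (z : ι → ℤ) (hz : z ∈ N) : Real.exp (-(d + 2 * D)) ≤ ∏ j, f j (z j) := by
    rw [hf, ← Real.exp_sum, Real.exp_le_exp, Finset.sum_sub_distrib, Finset.sum_neg_distrib,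
      ← Finset.mul_sum, ← Finset.mul_sum]
    have hweight : supportWeight s z = ∑ j, if z j = 0 then 0 else s j := by
      simp [supportWeight, Set.indicator_apply, ite_not]
    linarith [hN z hz]
  have hcount : N.card * Real.exp (-(d + 2 * D)) ≤
      Real.exp (4 / a * ∑ j, Real.exp (-2 * s j)) := by
    calc N.card * Real.exp (-(d + 2 * D))
        ≤ ∑ z ∈ N, ∏ j, f j (z j) := by
          rw [← nsmul_eq_mul]
          exact Finset.card_nsmul_le_sum _ _ _ hterm
      _ ≤ ∑ z ∈ Fintype.piFinset fun j ↦ N.image (· j), ∏ j, f j (z j) :=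
          Finset.sum_le_sum_of_subset_of_nonneg hsub fun z _ _ ↦
            Finset.prod_nonneg fun j _ ↦ hf_nonneg j (z j)
      _ = ∏ j, ∑ z ∈ N.image (· j), f j z := by rw [Finset.prod_univ_sum]
      _ ≤ ∏ j, Real.exp (4 / a * Real.exp (-2 * s j)) :=
          Finset.prod_le_prod (fun j _ ↦ Finset.sum_nonneg fun z _ ↦ hf_nonneg j z)
            fun j _ ↦ sum_int_exp_neg_sq_le _ ha _
      _ = _ := by rw [← Real.exp_sum, Finset.mul_sum]
  rwa [Real.exp_neg, ← div_eq_mul_inv, div_le_iff₀ (Real.exp_pos _), ← Real.exp_add, add_comm]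
    at hcount

lemma exists_int_abs_sub_mul_le {h : ℝ} (hh : 0 < h) (a : ℝ) :
    ∃ z : ℤ, |h * z| ≤ |a| ∧ |a - h * z| ≤ h := by
  wlog ha : 0 ≤ a generalizing a
  · obtain ⟨z, hz, hza⟩ := this (-a) (by linarith)
    refine ⟨-z, by simpa using hz, ?_⟩
    rw [← abs_neg]
    convert hza using 2
    push_cast
    ring
  have hfloor := Int.floor_le (a / h)
  have hlt := Int.lt_floor_add_one (a / h)
  rw [le_div_iff₀ hh] at hfloor
  rw [div_lt_iff₀ hh] at hlt
  have : (0 : ℝ) ≤ ⌊a / h⌋ := mod_cast Int.floor_nonneg.2 (by positivity)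
  refine ⟨⌊a / h⌋, abs_le_abs_of_nonneg (by positivity) (by linarith), ?_⟩
  rw [abs_of_nonneg (by linarith)]
  linarith

/-- The point of the lattice `h ℤ^ι` with coordinates `h z_j`. -/
noncomputable def latticePoint (h : ℝ) (z : ι → ℤ) : EuclideanSpace ℝ ι :=
  WithLp.toLp 2 fun j ↦ h * z j

lemma norm_latticePoint_sq (h : ℝ) (z : ι → ℤ) :
    ‖latticePoint h z‖ ^ 2 = h ^ 2 * ∑ j, (z j : ℝ) ^ 2 := by
  simp [EuclideanSpace.real_norm_sq_eq, latticePoint, mul_pow, Finset.mul_sum]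

lemma support_latticePoint {ι : Type*} {h : ℝ} (hh : h ≠ 0) (z : ι → ℤ) :
    Function.support (latticePoint h z).ofLp = Function.support z := by
  ext j
  simp [latticePoint, hh]

lemma finite_setOf_norm_latticePoint_le {h : ℝ} (hh : h ≠ 0) (r : ℝ) :
    {z : ι → ℤ | ‖latticePoint h z‖ ≤ r}.Finite := by
  classical
  refine (Set.finite_Icc (fun _ ↦ -⌈r / |h|⌉) fun _ ↦ ⌈r / |h|⌉).subset fun z hz ↦ ?_
  have hz_coord (j : ι) : |z j| ≤ ⌈r / |h|⌉ := by
    have hj : |h * z j| ≤ r := (PiLp.norm_apply_le (latticePoint h z) j).trans hz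
    rw [abs_mul, mul_comm, ← le_div_iff₀ (abs_pos.2 hh)] at hj
    exact_mod_cast hj.trans (Int.le_ceil _)
  exact ⟨fun j ↦ (abs_le.1 (hz_coord j)).1, fun j ↦ (abs_le.1 (hz_coord j)).2⟩

lemma exists_latticePoint_near {h : ℝ} (hh : 0 < h) (y : EuclideanSpace ℝ ι) :
    ∃ z : ι → ℤ, ‖latticePoint h z‖ ≤ ‖y‖ ∧
      ‖y - latticePoint h z‖ ^ 2 ≤ h ^ 2 * supportWeight 1 y.ofLp ∧
      Function.support z ⊆ Function.support y.ofLp := by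
  choose z hz_le hz_near using fun j ↦ exists_int_abs_sub_mul_le hh (y j)
  have hz_zero (j : ι) (hj : y j = 0) : z j = 0 := by
    have := hz_le j
    rw [hj, abs_zero, abs_nonpos_iff, mul_eq_zero] at this
    exact_mod_cast this.resolve_left hh.ne'
  refine ⟨z, ?_, ?_, fun j hj hy ↦ hj (hz_zero j hy)⟩
  · rw [← sq_le_sq₀ (norm_nonneg _) (norm_nonneg _), EuclideanSpace.real_norm_sq_eq,
      EuclideanSpace.real_norm_sq_eq]
    exact Finset.sum_le_sum fun j _ ↦ sq_le_sq.2 (hz_le j)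
  · rw [EuclideanSpace.real_norm_sq_eq, supportWeight, Finset.mul_sum]
    refine Finset.sum_le_sum fun j _ ↦ ?_
    by_cases hj : y j = 0
    · simp [latticePoint, hj, hz_zero j hj]
    · rw [Set.indicator_of_mem hj, Pi.one_apply, mul_one]
      exact sq_le_sq.2 ((hz_near j).trans (le_abs_self h))

theorem exists_net_of_supportWeight_le {s : ι → ℝ} (hs : 0 ≤ s) {ε D : ℝ} (hε : 0 < ε)
    (hD : 0 < D) :
    ∃ N : Finset (EuclideanSpace ℝ ι),
      (N.card : ℝ) ≤ Real.exp ((1 + 4 / ε ^ 2) * ∑ j, Real.exp (-2 * s j) + 4 * D) ∧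
      (∀ v ∈ N, ‖v‖ ≤ 1) ∧
      ∀ y : EuclideanSpace ℝ ι, ‖y‖ ≤ 1 → supportWeight s y.ofLp ≤ D →
        ∃ v ∈ N, ‖y - v‖ ≤ ε ∧ Function.support v.ofLp ⊆ Function.support y.ofLp := by
  classical
  set T := ∑ j, Real.exp (-2 * s j)
  have hd : 0 < T + 2 * D := by positivity
  set h := ε / √(T + 2 * D)
  have hh : 0 < h := by positivity
  have hh_sq : h ^ 2 * (T + 2 * D) = ε ^ 2 := by
    rw [div_pow, Real.sq_sqrt hd.le, div_mul_cancel₀ _ hd.ne']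
  have hfin : {z : ι → ℤ | ‖latticePoint h z‖ ≤ 1 ∧ supportWeight s z ≤ D}.Finite :=
    (finite_setOf_norm_latticePoint_le hh.ne' 1).subset fun z hz ↦ hz.1
  refine ⟨hfin.toFinset.image (latticePoint h), ?_, ?_, fun y hy hyD ↦ ?_⟩
  · have hcard : (hfin.toFinset.card : ℝ) ≤ Real.exp (T + 2 * D + 2 * D + 4 / ε ^ 2 * T) := by
      refine card_le_exp_of_forall_supportWeight_le (by positivity) fun z hz ↦ ?_
      obtain ⟨hz_norm, hz_weight⟩ := hfin.mem_toFinset.1 hz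
      refine ⟨?_, hz_weight⟩
      rw [← hh_sq, mul_right_comm, ← norm_latticePoint_sq]
      exact mul_le_of_le_one_left hd.le (pow_le_one₀ (norm_nonneg _) hz_norm)
    calc _ ≤ (hfin.toFinset.card : ℝ) := mod_cast Finset.card_image_le
      _ ≤ _ := hcard
      _ = _ := by ring_nf
  · intro v hv
    obtain ⟨z, hz, rfl⟩ := Finset.mem_image.1 hv
    exact (hfin.mem_toFinset.1 hz).1
  · obtain ⟨z, hz_norm, hz_near, hz_supp⟩ := exists_latticePoint_near hh y
    have hz_mem : z ∈ hfin.toFinset := hfin.mem_toFinset.2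
      ⟨hz_norm.trans hy, (supportWeight_le_of_support_subset hs hz_supp).trans hyD⟩
    refine ⟨_, Finset.mem_image_of_mem _ hz_mem, ?_, by rwa [support_latticePoint hh.ne']⟩
    refine le_of_sq_le_sq (hz_near.trans ?_) hε.le
    rw [← hh_sq]
    gcongr
    linarith [supportWeight_one_le s y.ofLp]

end Nets

section SparseFlatSplitting

open scoped RealInnerProductSpace

variable {ι F : Type*} [Fintype ι] [NormedAddCommGroup F] [InnerProductSpace ℝ F]
  {s : ι → ℝ} {t K D : ℝ}

lemma norm_le_two_mul_of_forall_inner_le {N : Set F}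
    (hN : ∀ u : F, ‖u‖ ≤ 1 → ∃ v ∈ N, ‖u - v‖ ≤ 1 / 2) {u : F} {M : ℝ}
    (hM : ∀ v ∈ N, ⟪v, u⟫ ≤ M) : ‖u‖ ≤ 2 * M := by
  have hunit : ‖‖u‖⁻¹ • u‖ ≤ 1 := by
    rw [norm_smul, norm_inv, norm_norm]
    exact inv_mul_le_one
  obtain ⟨v, hv, hdist⟩ := hN _ hunit
  have hsplit : ‖u‖ = ⟪v, u⟫ + ⟪‖u‖⁻¹ • u - v, u⟫ := by
    rw [inner_sub_left, real_inner_smul_left, real_inner_self_eq_norm_mul_norm]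
    rw [← mul_assoc, inv_mul_mul_self, add_sub_cancel]
  have hremainder : ⟪‖u‖⁻¹ • u - v, u⟫ ≤ 1 / 2 * ‖u‖ :=
    (real_inner_le_norm _ _).trans (by gcongr)
  linarith [hM v hv]

lemma inner_le_of_excess_le {g y : EuclideanSpace ℝ ι} (hg : excess s g.ofLp ≤ K)
    (hy : supportWeight s y.ofLp ≤ D) : ⟪g, y⟫ ≤ √(K + 8 * D) * ‖y‖ := by
  set g' : EuclideanSpace ℝ ι := WithLp.toLp 2 ((Function.support y.ofLp).indicator g.ofLp)
  have hinner : ⟪g, y⟫ = ⟪g', y⟫ := by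
    simp only [PiLp.inner_apply]
    refine Finset.sum_congr rfl fun j _ ↦ ?_
    by_cases hj : y j = 0 <;> simp [g', hj]
  have hnorm : ‖g'‖ ≤ √(K + 8 * D) := by
    refine Real.le_sqrt_of_sq_le ?_
    calc ‖g'‖ ^ 2 ≤ ∑ j, (max (g j ^ 2 - 8 * s j) 0 +
            8 * (Function.support y.ofLp).indicator s j) := by
          rw [EuclideanSpace.real_norm_sq_eq]
          refine Finset.sum_le_sum fun j _ ↦ ?_
          by_cases hj : y j = 0
          · simp [g', hj]
          · simpa [g', hj] using sub_le_iff_le_add.1 (le_max_left (g j ^ 2 - 8 * s j) 0)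
      _ = excess s g.ofLp + 8 * supportWeight s y.ofLp := by
          rw [Finset.sum_add_distrib, ← Finset.mul_sum, excess, supportWeight]
      _ ≤ K + 8 * D := by gcongr
  rw [hinner]
  exact (real_inner_le_norm _ _).trans (by gcongr)

lemma mul_le_of_abs_le_mul_sqrt {a : ℝ} (ha : 0 ≤ a) (ht : 0 ≤ t) {z : ℝ} (g : ℝ)
    (hz : |z| ≤ t * √a) : z * g ≤ t / 2 * max (g ^ 2 - 8 * a) 0 + 4 * (|z| * √a) := by
  have habs : z * g ≤ |z| * |g| := (le_abs_self _).trans (abs_mul z g).le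
  have hsq : √a ^ 2 = a := Real.sq_sqrt ha
  have hg_sq : |g| ^ 2 = g ^ 2 := sq_abs g
  rcases le_or_gt |g| (4 * √a) with hg | hg
  · have hmax : 0 ≤ t / 2 * max (g ^ 2 - 8 * a) 0 := by positivity
    have := mul_le_mul_of_nonneg_left hg (abs_nonneg z)
    linarith
  · have hmax : |g| ^ 2 / 2 ≤ max (g ^ 2 - 8 * a) 0 :=
      le_max_of_le_left (by nlinarith [Real.sqrt_nonneg a])
    have hz_le : |z| ≤ t * (|g| / 4) := hz.trans (by gcongr; linarith)
    calc z * g ≤ |z| * |g| := habs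
      _ ≤ t * (|g| / 4) * |g| := by gcongr
      _ = t / 2 * (|g| ^ 2 / 2) := by ring
      _ ≤ t / 2 * max (g ^ 2 - 8 * a) 0 := by gcongr
      _ ≤ _ := le_add_of_nonneg_right (by positivity)

lemma inner_le_of_abs_le_mul_sqrt (hs : 0 ≤ s) (ht : 0 ≤ t) {g z : EuclideanSpace ℝ ι}
    (hg : excess s g.ofLp ≤ K) (hz : ∀ j, |z j| ≤ t * √(s j)) :
    ⟪g, z⟫ ≤ t / 2 * K + 4 * ∑ j, |z j| * √(s j) := by
  calc ⟪g, z⟫ = ∑ j, z j * g j := by simp [PiLp.inner_apply]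
    _ ≤ ∑ j, (t / 2 * max (g j ^ 2 - 8 * s j) 0 + 4 * (|z j| * √(s j))) :=
        Finset.sum_le_sum fun j _ ↦ mul_le_of_abs_le_mul_sqrt (hs j) ht (g j) (hz j)
    _ = t / 2 * excess s g.ofLp + 4 * ∑ j, |z j| * √(s j) := by
        rw [Finset.sum_add_distrib, ← Finset.mul_sum, ← Finset.mul_sum, excess]
    _ ≤ _ := by gcongr

lemma norm_apply_le_of_supportWeight_le [FiniteDimensional ℝ F]
    {T : EuclideanSpace ℝ ι →ₗ[ℝ] F} {N : Set F}
    (hN : ∀ u : F, ‖u‖ ≤ 1 → ∃ v ∈ N, ‖u - v‖ ≤ 1 / 2)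
    (hT : ∀ v ∈ N, excess s (T.adjoint v).ofLp ≤ K)
    {y : EuclideanSpace ℝ ι} (hy : supportWeight s y.ofLp ≤ D) :
    ‖T y‖ ≤ 2 * √(K + 8 * D) * ‖y‖ := by
  rw [mul_assoc]
  refine norm_le_two_mul_of_forall_inner_le hN fun v hv ↦ ?_
  rw [← LinearMap.adjoint_inner_left]
  exact inner_le_of_excess_le (hT v hv) hy

lemma norm_apply_le_of_abs_le_mul_sqrt [FiniteDimensional ℝ F]
    {T : EuclideanSpace ℝ ι →ₗ[ℝ] F} {N : Set F}
    (hN : ∀ u : F, ‖u‖ ≤ 1 → ∃ v ∈ N, ‖u - v‖ ≤ 1 / 2)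
    (hT : ∀ v ∈ N, excess s (T.adjoint v).ofLp ≤ K) (hs : 0 ≤ s) (ht : 0 ≤ t)
    {z : EuclideanSpace ℝ ι} (hz : ∀ j, |z j| ≤ t * √(s j)) :
    ‖T z‖ ≤ t * K + 8 * ∑ j, |z j| * √(s j) := by
  have hle : ‖T z‖ ≤ 2 * (t / 2 * K + 4 * ∑ j, |z j| * √(s j)) := by
    refine norm_le_two_mul_of_forall_inner_le hN fun v hv ↦ ?_
    rw [← LinearMap.adjoint_inner_left]
    exact inner_le_of_abs_le_mul_sqrt hs ht (hT v hv) hz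
  linarith

lemma mul_norm_le_norm_apply_of_net {T : EuclideanSpace ℝ ι →ₗ[ℝ] F} {ε κ L : ℝ} (hs : 0 ≤ s)
    (hκ : 0 ≤ κ) (hL : 0 ≤ L) {N : Set (EuclideanSpace ℝ ι)}
    (hN : ∀ y : EuclideanSpace ℝ ι, ‖y‖ ≤ 1 → supportWeight s y.ofLp ≤ D →
      ∃ v ∈ N, ‖y - v‖ ≤ ε ∧ Function.support v.ofLp ⊆ Function.support y.ofLp)
    (hlower : ∀ v ∈ N, κ * ‖v‖ ≤ ‖T v‖)
    (hupper : ∀ y : EuclideanSpace ℝ ι, supportWeight s y.ofLp ≤ D → ‖T y‖ ≤ L * ‖y‖)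
    {y : EuclideanSpace ℝ ι} (hy : supportWeight s y.ofLp ≤ D) :
    (κ * (1 - ε) - L * ε) * ‖y‖ ≤ ‖T y‖ := by
  wlog hy_unit : ‖y‖ = 1 generalizing y
  · rcases eq_or_ne y 0 with rfl | hy0
    · simp
    have hscaled := this (y := ‖y‖⁻¹ • y)
      ((supportWeight_le_of_support_subset hs (Function.support_const_smul_subset _ _)).trans hy)
      (norm_smul_inv_norm hy0)
    rw [map_smul, norm_smul, norm_smul, norm_inv, norm_norm, mul_left_comm] at hscaled
    exact le_of_mul_le_mul_left hscaled (by positivity)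
  obtain ⟨v, hv, hdist, hsupp⟩ := hN y hy_unit.le hy
  have hsupp_sub : Function.support (y - v).ofLp ⊆ Function.support y.ofLp := fun j hj hyj ↦ by
    have hvj : v j = 0 := by_contra fun h ↦ hsupp h hyj
    simp_all
  have herror : ‖T (y - v)‖ ≤ L * ε :=
    (hupper _ ((supportWeight_le_of_support_subset hs hsupp_sub).trans hy)).trans (by gcongr)
  have hnorm_v : 1 - ε ≤ ‖v‖ := by linarith [norm_sub_norm_le y v]
  have htriangle : ‖T v‖ - ‖T y‖ ≤ ‖T (y - v)‖ := by
    rw [map_sub, norm_sub_rev]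
    exact norm_sub_norm_le _ _
  rw [hy_unit, mul_one]
  linarith [hlower v hv, mul_le_mul_of_nonneg_left hnorm_v hκ]

/-- The flat part of `x` at level `t`: the coordinates with `|x_j| ≤ t √s_j` are kept and the
others are set to zero. The remainder has small `supportWeight`. -/
noncomputable def flatPart (s : ι → ℝ) (t : ℝ) (x : EuclideanSpace ℝ ι) : EuclideanSpace ℝ ι :=
  WithLp.toLp 2 ({j | |x j| ≤ t * √(s j)}.indicator x.ofLp)

lemma abs_flatPart_le_abs {ι : Type*} (s : ι → ℝ) (t : ℝ) (x : EuclideanSpace ℝ ι) (j : ι) :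
    |flatPart s t x j| ≤ |x j| := by
  by_cases hj : |x j| ≤ t * √(s j) <;> simp [flatPart, hj]

lemma abs_flatPart_le_mul_sqrt {ι : Type*} (s : ι → ℝ) (ht : 0 ≤ t) (x : EuclideanSpace ℝ ι)
    (j : ι) : |flatPart s t x j| ≤ t * √(s j) := by
  by_cases hj : |x j| ≤ t * √(s j)
  · simp [flatPart, hj]
  · simp only [flatPart, Set.indicator_apply, Set.mem_ofPred_eq, if_neg hj, abs_zero]
    positivity

lemma norm_flatPart_sq_le (s : ι → ℝ) (ht : 0 ≤ t) (x : EuclideanSpace ℝ ι) :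
    ‖flatPart s t x‖ ^ 2 ≤ t * ∑ j, |x j| * √(s j) := by
  rw [EuclideanSpace.real_norm_sq_eq, Finset.mul_sum]
  refine Finset.sum_le_sum fun j _ ↦ ?_
  calc flatPart s t x j ^ 2 = |flatPart s t x j| * |flatPart s t x j| := by rw [← sq, sq_abs]
    _ ≤ |x j| * (t * √(s j)) := mul_le_mul (abs_flatPart_le_abs s t x j)
        (abs_flatPart_le_mul_sqrt s ht x j) (abs_nonneg _) (abs_nonneg _)
    _ = t * (|x j| * √(s j)) := by ring

lemma mul_supportWeight_sub_flatPart_le (hs : 0 ≤ s) (t : ℝ) (x : EuclideanSpace ℝ ι) :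
    t * supportWeight s (x - flatPart s t x).ofLp ≤ ∑ j, |x j| * √(s j) := by
  rw [supportWeight, Finset.mul_sum]
  refine Finset.sum_le_sum fun j _ ↦ ?_
  by_cases hj : j ∈ Function.support (x - flatPart s t x).ofLp
  · have hlarge : t * √(s j) ≤ |x j| := by
      contrapose! hj
      simp [flatPart, hj.le]
    calc t * (Function.support (x - flatPart s t x).ofLp).indicator s j
        = t * √(s j) * √(s j) := by
          rw [Set.indicator_of_mem hj, mul_assoc, Real.mul_self_sqrt (hs j)]
      _ ≤ |x j| * √(s j) := by gcongr
  · rw [Set.indicator_of_notMem hj, mul_zero]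
    positivity

section

variable {T : EuclideanSpace ℝ ι →ₗ[ℝ] F} {κ : ℝ} {x : EuclideanSpace ℝ ι}

lemma norm_le_mul_of_map_eq_zero_of_sum_le (hs : 0 ≤ s) (hκ : 0 < κ) (hD : 0 ≤ D)
    (hlower : ∀ y : EuclideanSpace ℝ ι, supportWeight s y.ofLp ≤ D → κ * ‖y‖ ≤ ‖T y‖)
    (ht : 0 < t)
    (hflat : ∀ z : EuclideanSpace ℝ ι, (∀ j, |z j| ≤ t * √(s j)) →
      ‖T z‖ ≤ t * K + 8 * ∑ j, |z j| * √(s j))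
    (hx : T x = 0) (hsum : ∑ j, |x j| * √(s j) ≤ t * D) :
    ‖x‖ ≤ ((K + 8 * D) / κ + √D) * t := by
  set z := flatPart s t x
  have hweight : supportWeight s (x - z).ofLp ≤ D :=
    le_of_mul_le_mul_left ((mul_supportWeight_sub_flatPart_le hs t x).trans hsum) ht
  have hsum_flat : ∑ j, |z j| * √(s j) ≤ ∑ j, |x j| * √(s j) := Finset.sum_le_sum fun j _ ↦
    mul_le_mul_of_nonneg_right (abs_flatPart_le_abs s t x j) (Real.sqrt_nonneg _)
  have hsparse : κ * ‖x - z‖ ≤ (K + 8 * D) * t := by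
    have hTz : ‖T (x - z)‖ = ‖T z‖ := by rw [map_sub, hx, zero_sub, norm_neg]
    linarith [hlower _ hweight, hflat z (abs_flatPart_le_mul_sqrt s ht.le x)]
  have hnorm_flat : ‖z‖ ≤ √D * t := by
    refine le_of_sq_le_sq ((norm_flatPart_sq_le s ht.le x).trans ?_) (by positivity)
    rw [mul_pow, Real.sq_sqrt hD]
    nlinarith
  calc ‖x‖ ≤ ‖x - z‖ + ‖z‖ := norm_le_norm_sub_add x z
    _ ≤ (K + 8 * D) * t / κ + √D * t := by
        gcongr
        rwa [le_div_iff₀' hκ]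
    _ = _ := by ring

lemma norm_le_mul_of_map_eq_zero (hs : 0 ≤ s) (hκ : 0 < κ) (hK : 0 ≤ K) (hD : 0 < D)
    (hlower : ∀ y : EuclideanSpace ℝ ι, supportWeight s y.ofLp ≤ D → κ * ‖y‖ ≤ ‖T y‖)
    (hflat : ∀ t, 0 ≤ t → ∀ z : EuclideanSpace ℝ ι, (∀ j, |z j| ≤ t * √(s j)) →
      ‖T z‖ ≤ t * K + 8 * ∑ j, |z j| * √(s j))
    (hx : T x = 0) :
    ‖x‖ ≤ ((K + 8 * D) / κ + √D) / D * ∑ j, |x j| * √(s j) := by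
  set S := ∑ j, |x j| * √(s j)
  have hS : 0 ≤ S / D := by positivity
  -- The level `S / D` itself is only reached as a limit, since it vanishes when `S = 0`.
  have hlevel (t : ℝ) (ht : S / D < t) : ‖x‖ / ((K + 8 * D) / κ + √D) ≤ t := by
    have ht_pos : 0 < t := hS.trans_lt ht
    rw [div_le_iff₀' (by positivity)]
    exact norm_le_mul_of_map_eq_zero_of_sum_le hs hκ hD.le hlower ht_pos (hflat t ht_pos.le) hx
      ((div_lt_iff₀ hD).1 ht).le
  have hlimit := le_of_forall_gt_imp_ge_of_dense hlevel
  rw [div_le_iff₀' (by positivity)] at hlimit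
  exact hlimit.trans_eq (by ring)

end

theorem norm_le_mul_of_map_eq_zero_of_nets [FiniteDimensional ℝ F]
    {T : EuclideanSpace ℝ ι →ₗ[ℝ] F} {r : ℝ} (hs : 0 ≤ s) (hr : 0 < r) {N : Set F}
    (hN : ∀ u : F, ‖u‖ ≤ 1 → ∃ v ∈ N, ‖u - v‖ ≤ 1 / 2) {N' : Set (EuclideanSpace ℝ ι)}
    (hN' : ∀ y : EuclideanSpace ℝ ι, ‖y‖ ≤ 1 → supportWeight s y.ofLp ≤ r / 100 →
      ∃ v ∈ N', ‖y - v‖ ≤ 1 / 160 ∧ Function.support v.ofLp ⊆ Function.support y.ofLp)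
    (hexcess : ∀ v ∈ N, excess s (T.adjoint v).ofLp ≤ 80 * r)
    (hlower : ∀ v ∈ N', √r / 2 * ‖v‖ ≤ ‖T v‖) {x : EuclideanSpace ℝ ι} (hx : T x = 0) :
    ‖x‖ ≤ 10 ^ 5 / √r * ∑ j, |x j| * √(s j) := by
  have hupper (y : EuclideanSpace ℝ ι) (hy : supportWeight s y.ofLp ≤ r / 100) :
      ‖T y‖ ≤ 20 * √r * ‖y‖ := by
    refine (norm_apply_le_of_supportWeight_le hN hexcess hy).trans ?_
    have hsqrt : √(80 * r + 8 * (r / 100)) ≤ 10 * √r :=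
      Real.sqrt_le_iff.2 ⟨by positivity, by rw [mul_pow, Real.sq_sqrt hr.le]; linarith⟩
    gcongr ?_ * ‖y‖
    linarith
  have hlower_sparse (y : EuclideanSpace ℝ ι) (hy : supportWeight s y.ofLp ≤ r / 100) :
      √r / 8 * ‖y‖ ≤ ‖T y‖ := by
    refine le_trans ?_ (mul_norm_le_norm_apply_of_net hs (by positivity) (by positivity) hN'
      hlower hupper hy)
    gcongr
    linarith [Real.sqrt_nonneg r]
  refine (norm_le_mul_of_map_eq_zero (K := 80 * r) (D := r / 100) hs (by positivity)
    (by positivity) (by positivity) hlower_sparse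
    (fun t ht z hz ↦ norm_apply_le_of_abs_le_mul_sqrt hN hexcess hs ht hz) hx).trans ?_
  have hsqrt_div : √(r / 100) = √r / 10 := by
    rw [Real.sqrt_div hr.le, show (100 : ℝ) = 10 ^ 2 by norm_num, Real.sqrt_sq (by norm_num)]
  have hconst : ((80 * r + 8 * (r / 100)) / (√r / 8) + √(r / 100)) / (r / 100) = 64074 / √r := by
    rw [hsqrt_div]
    field_simp
    rw [Real.sq_sqrt hr.le]
    ring
  rw [hconst]
  gcongr
  norm_num

end SparseFlatSplitting

section KernelEstimate

lemma measure_setOf_exists_mem_le_exp {Ω α : Type*} [MeasurableSpace Ω] {μ : Measure Ω}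
    {N : Finset α} {B : α → Set Ω} {a b : ℝ} (hN : (N.card : ℝ) ≤ Real.exp a)
    (hB : ∀ v ∈ N, μ (B v) ≤ ENNReal.ofReal (Real.exp b)) :
    μ {ω | ∃ v ∈ N, ω ∈ B v} ≤ ENNReal.ofReal (Real.exp (a + b)) := by
  have hset : {ω | ∃ v ∈ N, ω ∈ B v} = ⋃ v ∈ N, B v := by ext; simp
  calc μ {ω | ∃ v ∈ N, ω ∈ B v} ≤ ∑ v ∈ N, μ (B v) := hset ▸ measure_biUnion_finset_le N B
    _ ≤ N.card * ENNReal.ofReal (Real.exp b) := by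
        rw [← nsmul_eq_mul]
        exact Finset.sum_le_card_nsmul _ _ _ hB
    _ ≤ ENNReal.ofReal (Real.exp a) * ENNReal.ofReal (Real.exp b) := by
        gcongr
        rwa [← ENNReal.ofReal_natCast, ENNReal.ofReal_le_ofReal_iff (Real.exp_pos a).le]
    _ = _ := by rw [← ENNReal.ofReal_mul (Real.exp_pos a).le, ← Real.exp_add]

lemma exists_half_net_unitBall (ι : Type*) [Fintype ι] [Nonempty ι] :
    ∃ N : Finset (EuclideanSpace ℝ ι), (N.card : ℝ) ≤ Real.exp (18 * Fintype.card ι) ∧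
      (∀ v ∈ N, ‖v‖ ≤ 1) ∧
      ∀ u : EuclideanSpace ℝ ι, ‖u‖ ≤ 1 → ∃ v ∈ N, ‖u - v‖ ≤ 1 / 2 := by
  have hD : (0 : ℝ) < Fintype.card ι / 4 := by have := Fintype.card_pos (α := ι); positivity
  obtain ⟨N, hcard, hball, hnet⟩ :=
    exists_net_of_supportWeight_le (s := (0 : ι → ℝ)) le_rfl one_half_pos hD
  refine ⟨N, hcard.trans_eq ?_, hball, fun u hu ↦ ?_⟩
  · congr 1
    simp only [Pi.zero_apply, mul_zero, Real.exp_zero, Finset.sum_const, Finset.card_univ,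
      nsmul_eq_mul]
    ring
  · obtain ⟨v, hv, hdist, -⟩ := hnet u hu (by simpa [supportWeight] using hD.le)
    exact ⟨v, hv, hdist⟩

theorem gaussianMatrix_compl_setOf_norm_le_of_apply_eq_zero_le {n m : ℕ} (hn : 0 < n)
    {s : Fin m → ℝ} (hs : 0 ≤ s) :
    gaussianMatrix n m {A | ∀ x, euclideanLin A x = 0 →
        ‖x‖ ≤ 10 ^ 5 / √n * ∑ j, |x j| * √(s j)}ᶜ ≤
      ENNReal.ofReal (2 * Real.exp (102401 * ∑ j, Real.exp (-2 * s j) - n / 4)) := by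
  have : Nonempty (Fin n) := Fin.pos_iff_nonempty.1 hn
  have hn_pos : (0 : ℝ) < n := mod_cast hn
  obtain ⟨N, hN_card, hN_ball, hN⟩ := exists_half_net_unitBall (Fin n)
  obtain ⟨N', hN'_card, -, hN'⟩ := exists_net_of_supportWeight_le hs
    (show (0 : ℝ) < 1 / 160 by norm_num) (show (0 : ℝ) < n / 100 by positivity)
  have hexcess := measure_setOf_exists_mem_le_exp hN_card fun v hv ↦
    gaussianMatrix_le_excess_adjoint_le (hN_ball v hv) s (80 * n)
  have hlower := measure_setOf_exists_mem_le_exp hN'_card fun v _ ↦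
    gaussianMatrix_norm_euclideanLin_lt_le (n := n) v
  refine (measure_mono fun A hA ↦ ?_).trans
    ((measure_union_le _ _).trans ((add_le_add hexcess hlower).trans ?_))
  · contrapose! hA
    rw [Set.mem_union, not_or] at hA
    refine Set.notMem_compl_iff.2 fun x hx ↦ ?_
    refine norm_le_mul_of_map_eq_zero_of_nets hs hn_pos hN hN' (fun v hv ↦ ?_) (fun v hv ↦ ?_) hx
    · exact le_of_not_ge fun h ↦ hA.1 ⟨v, hv, h⟩
    · exact le_of_not_gt fun h ↦ hA.2 ⟨v, hv, h⟩
  · rw [← ENNReal.ofReal_add (Real.exp_pos _).le (Real.exp_pos _).le,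
      two_mul (Real.exp (102401 * _ - _)), Fintype.card_fin]
    have hT : 0 ≤ ∑ j, Real.exp (-2 * s j) := by positivity
    gcongr <;> linarith

end KernelEstimate

section Ellipsoid

variable {n m : ℕ}

/-- The weight `log j + 1` of the paper's `j`-th coordinate for `j ≥ k`, and `0` for `j < k`; the
argument `j` here is `0`-based. -/
noncomputable def logWeight (k j : ℕ) : ℝ := if k ≤ j + 1 then Real.log (j + 1) + 1 else 0

lemma logWeight_nonneg (k j : ℕ) : 0 ≤ logWeight k j := by
  unfold logWeight
  split_ifs
  · have : 0 ≤ Real.log (j + 1) := Real.log_nonneg (by simp)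
    positivity
  · rfl

lemma exp_neg_two_mul_logWeight_le (k j : ℕ) : Real.exp (-2 * logWeight k j) ≤
    (if j ∈ Finset.range (k - 1) then 1 else 0) + 1 / 2 * (((j + 1 : ℕ) : ℝ) ^ 2)⁻¹ := by
  by_cases hj : k ≤ j + 1
  · have hexp : Real.exp (-2) ≤ 1 / 2 := by
      rw [Real.exp_neg, one_div]
      gcongr
      linarith [Real.add_one_le_exp 2]
    calc Real.exp (-2 * logWeight k j) = Real.exp (-2) * (((j + 1 : ℕ) : ℝ) ^ 2)⁻¹ := by
          rw [logWeight, if_pos hj, mul_add_one, Real.exp_add, mul_comm, neg_mul, ← Nat.cast_succ,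
            Real.exp_neg (2 * _), two_mul (Real.log _), Real.exp_add,
            Real.exp_log (by positivity), sq]
      _ ≤ 1 / 2 * (((j + 1 : ℕ) : ℝ) ^ 2)⁻¹ := by gcongr
      _ ≤ _ := le_add_of_nonneg_left (by positivity)
  · rw [logWeight, if_neg hj, mul_zero, Real.exp_zero, if_pos (Finset.mem_range.2 (by omega))]
    exact le_add_of_nonneg_right (by positivity)

lemma sum_exp_neg_two_mul_logWeight_le {k : ℕ} (hk : 1 ≤ k) (m : ℕ) :
    ∑ j : Fin m, Real.exp (-2 * logWeight k j) ≤ k := by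
  have hsum : ∑ j ∈ Finset.range m, (((j + 1 : ℕ) : ℝ) ^ 2)⁻¹ ≤ 2 := by
    simpa [Finset.sum_range_succ'] using sum_range_succ_inv_sq_le_two m
  rw [Fin.sum_univ_eq_sum_range (fun j ↦ Real.exp (-2 * logWeight k j)) m]
  calc _ ≤ ∑ j ∈ Finset.range m, ((if j ∈ Finset.range (k - 1) then 1 else 0) +
          1 / 2 * (((j + 1 : ℕ) : ℝ) ^ 2)⁻¹) := Finset.sum_le_sum
        fun j _ ↦ exp_neg_two_mul_logWeight_le k j
    _ ≤ (k - 1 : ℕ) + 1 / 2 * 2 := by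
        rw [Finset.sum_add_distrib, ← Finset.mul_sum, Finset.sum_boole]
        gcongr
        exact (Finset.card_le_card fun j hj ↦ (Finset.mem_filter.1 hj).2).trans_eq
          (Finset.card_range _)
    _ = k := by
        push_cast [Nat.cast_sub hk]
        ring

lemma lpnorm_one_eq (x : Fin m → ℝ) : lpnorm 1 x = ∑ j, |x j| := by
  simp [lpnorm]

lemma lpnorm_two_eq (x : Fin m → ℝ) : lpnorm 2 x = ‖WithLp.toLp 2 x‖ := by
  simp [lpnorm, EuclideanSpace.norm_eq, Real.sqrt_eq_rpow]

lemma mem_kerSet_iff (A : Fin n → Fin m → ℝ) (x : Fin m → ℝ) :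
    x ∈ kerSet A ↔ euclideanLin A (WithLp.toLp 2 x) = 0 := by
  simp only [kerSet, Set.mem_ofPred_eq, PiLp.ext_iff]
  rfl

lemma radq_two_ellipsoid_one_le {A : Fin n → Fin m → ℝ} {σ w : Fin m → ℝ} {R S : ℝ}
    (hσ : ∀ j, 0 < σ j) (hR : 0 ≤ R) (hS : 0 ≤ S) (hw : ∀ j, σ j * w j ≤ S)
    (hA : ∀ x, euclideanLin A x = 0 → ‖x‖ ≤ R * ∑ j, |x j| * w j) :
    radq 2 (ellipsoid 1 σ) (kerSet A) ≤ R * S := by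
  refine Real.sSup_le ?_ (mul_nonneg hR hS)
  rintro _ ⟨x, ⟨hx_mem, hx_ker⟩, rfl⟩
  rw [ellipsoid, Set.mem_ofPred_eq, lpnorm_one_eq] at hx_mem
  rw [lpnorm_two_eq]
  refine (hA _ ((mem_kerSet_iff A x).1 hx_ker)).trans (mul_le_mul_of_nonneg_left ?_ hR)
  calc ∑ j, |x j| * w j = ∑ j, |x j / σ j| * (σ j * w j) := by
        refine Finset.sum_congr rfl fun j _ ↦ ?_
        rw [abs_div, abs_of_pos (hσ j), ← mul_assoc, div_mul_cancel₀ _ (hσ j).ne']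
    _ ≤ ∑ j, |x j / σ j| * S := by gcongr with j; exact hw j
    _ ≤ 1 * S := by rw [← Finset.sum_mul]; gcongr
    _ = S := one_mul S

lemma mul_sqrt_logWeight_le_sSup {σ : Fin m → ℝ} (hσ : ∀ j, 0 < σ j) (k : ℕ) (j : Fin m) :
    σ j * √(logWeight k j) ≤ sSup ((fun j : Fin m ↦ σ j * √(Real.log ((j : ℕ) + 1) + 1)) ''
      {j | k ≤ (j : ℕ) + 1}) := by
  unfold logWeight
  split_ifs with hj
  · exact le_csSup (Set.toFinite _).bddAbove ⟨j, hj, rfl⟩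
  · rw [Real.sqrt_zero, mul_zero]
    exact Real.sSup_nonneg (Set.forall_mem_image.2 fun i _ ↦
      mul_nonneg (hσ i).le (Real.sqrt_nonneg _))

end Ellipsoid

lemma ofReal_one_sub_le_measure_of_compl_le {Ω : Type*} [MeasurableSpace Ω] {μ : Measure Ω}
    [IsProbabilityMeasure μ] {S : Set Ω} {δ : ℝ} (hδ : 0 ≤ δ) (hS : μ Sᶜ ≤ ENNReal.ofReal δ) :
    ENNReal.ofReal (1 - δ) ≤ μ S := by
  rw [ENNReal.ofReal_sub 1 hδ, ENNReal.ofReal_one, tsub_le_iff_right]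
  calc (1 : ℝ≥0∞) = μ Set.univ := measure_univ.symm
    _ ≤ μ S + μ Sᶜ := measure_univ_le_add_compl S
    _ ≤ μ S + ENNReal.ofReal δ := by gcongr

theorem statement1_general :
    ∃ C c c₁ c₂ : ℝ, 0 < C ∧ 0 < c ∧ 0 < c₁ ∧ 0 < c₂ ∧
      ∀ (m n : ℕ), 1 ≤ n → ∀ σ : Fin m → ℝ, (∀ j, 0 < σ j) →
      ENNReal.ofReal (1 - c₁ * Real.exp (-c₂ * n)) ≤
        gaussianMatrix n m {A |
          radq 2 (ellipsoid 1 σ) (kerSet A) ≤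
            C * (n : ℝ) ^ (-(1 / 2 : ℝ)) *
              sSup ((fun j : Fin m => σ j * Real.sqrt (Real.log ((j : ℕ) + 1) + 1)) ''
                {j | max 1 ⌈c * (n : ℝ)⌉₊ ≤ (j : ℕ) + 1})} := by
  refine ⟨10 ^ 5, 1 / 10 ^ 6, 2 * Real.exp 102401, 1 / 10, by positivity, by positivity,
    by positivity, by positivity, fun m n hn σ hσ ↦ ?_⟩
  set k := max 1 ⌈1 / 10 ^ 6 * (n : ℝ)⌉₊
  set S := sSup ((fun j : Fin m ↦ σ j * √(Real.log ((j : ℕ) + 1) + 1)) '' {j | k ≤ (j : ℕ) + 1})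
  have hS : 0 ≤ S := Real.sSup_nonneg (Set.forall_mem_image.2 fun i _ ↦
    mul_nonneg (hσ i).le (Real.sqrt_nonneg _))
  have hk : (k : ℝ) ≤ 1 / 10 ^ 6 * n + 1 := by
    have := (Nat.ceil_lt_add_one (show 0 ≤ 1 / 10 ^ 6 * (n : ℝ) by positivity)).le
    simp only [k, Nat.cast_max, Nat.cast_one]
    exact max_le (by simp) this
  refine ofReal_one_sub_le_measure_of_compl_le (by positivity) ((measure_mono
    (Set.compl_subset_compl.2 fun A hA ↦ ?_)).trans
    ((gaussianMatrix_compl_setOf_norm_le_of_apply_eq_zero_le hn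
      (s := fun j : Fin m ↦ logWeight k j) fun j ↦ logWeight_nonneg k j).trans ?_))
  · rw [Set.mem_ofPred_eq, Real.rpow_neg n.cast_nonneg, ← Real.sqrt_eq_rpow, ← div_eq_mul_inv]
    exact radq_two_ellipsoid_one_le hσ (by positivity) hS (mul_sqrt_logWeight_le_sSup hσ k) hA
  · have hT := sum_exp_neg_two_mul_logWeight_le (show 1 ≤ k from le_max_left _ _) m
    rw [mul_assoc, ← Real.exp_add]
    gcongr
    linarith

/-- For `p = 1`, with probability at least `1 - c₁ exp(-c₂ n)` the
circumradius of the section of the `ℓ_1`-ellipsoid with the kernel of a Gaussian random matrix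
is at most `C n^{-1/2} sup_{k ≤ j ≤ m} σ_j √(log j + 1)` with `k = max(1, ⌈c n⌉)`.
(Here `σ : Fin m → ℝ` is 0-indexed, i.e. `σ ⟨j-1⟩` is the paper's `σ_j`.) -/
theorem statement1 :
    ∃ C c c₁ c₂ : ℝ, 0 < C ∧ 0 < c ∧ 0 < c₁ ∧ 0 < c₂ ∧
      ∀ (m n : ℕ), 1 ≤ n → n < m →
      ∀ σ : Fin m → ℝ, (∀ j, 0 < σ j) → (∀ i j : Fin m, i ≤ j → σ j ≤ σ i) →
      ENNReal.ofReal (1 - c₁ * Real.exp (-c₂ * n)) ≤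
        gaussianMatrix n m {A |
          radq 2 (ellipsoid 1 σ) (kerSet A) ≤
            C * (n : ℝ) ^ (-(1 / 2 : ℝ)) *
              sSup ((fun j : Fin m => σ j * Real.sqrt (Real.log ((j : ℕ) + 1) + 1)) ''
                {j | max 1 ⌈c * (n : ℝ)⌉₊ ≤ (j : ℕ) + 1})} :=
  let ⟨C, c, c₁, c₂, hC, hc, hc₁, hc₂, h⟩ := statement1_general
  ⟨C, c, c₁, c₂, hC, hc, hc₁, hc₂, fun m n hn _ σ hσ _ ↦ h m n hn σ hσ⟩
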